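/- arXiv:2001.08825 — 6 statements merged into one kernel-verified Lean document; each statement's English description precedes it below -/
import Mathlib

section
/- Let α ∈ (0,2), n ∈ ℕ with n ≥ 1, and x ∈ ℝ. For y > 0 define g_n(y) = [(y+x+i)^(n−1)·(y−x+i)^(n+1) − (y−x−i)^(n−1)·(y+x−i)^(n+1)] / [y^α·(y+x−i)^(n+1)·(y−x+i)^(n+1)] (integer powers in ℂ; y^α the real power of y > 0). Then g_n is absolutely integrable on (0,∞), and ∫₀^∞ g_n(y) dy = (π·α·e^(−iπα/2)·i^(1+α) / (sin(πα/2)·(ix+1)^(1+α))) · (1/n)·∑_{k=0}^{n−1} C(n,k+1)·C(−1−α,k)·(2/(ix+1))^k, where i^(1+α) = e^(iπ(1+α)/2), so that e^(−iπα/2)·i^(1+α) = i. (The last factor equals ₂F₁(1−n, 1+α; 2; 2/(ix+1)).) -/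
open MeasureTheory Finset

/-- The constant `c_α = α·2^(α−1)·Γ(1/2+α/2)/(√π·Γ(1−α/2))`. -/
noncomputable def cFrac (α : ℝ) : ℝ :=
  α * 2 ^ (α - 1) * Real.Gamma (1 / 2 + α / 2) / (Real.sqrt Real.pi * Real.Gamma (1 - α / 2))

/-- The complex Higgins function `λ_n(x) = ((ix−1)/(ix+1))^n`. -/
noncomputable def higgins (n : ℤ) (x : ℝ) : ℂ :=
  ((Complex.I * (x : ℂ) - 1) / (Complex.I * (x : ℂ) + 1)) ^ n

/-- The derivative `λ_n'`. -/
noncomputable def higgins' (n : ℤ) (x : ℝ) : ℂ := deriv (higgins n) x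

/-- The complex Christov function `μ_n(x) = (ix−1)^n/(ix+1)^(n+1)`. -/
noncomputable def christov (n : ℤ) (x : ℝ) : ℂ :=
  (Complex.I * (x : ℂ) - 1) ^ n / (Complex.I * (x : ℂ) + 1) ^ (n + 1)

/-- The derivative `μ_n'`. -/
noncomputable def christov' (n : ℤ) (x : ℝ) : ℂ := deriv (christov n) x

/-- Generalized binomial coefficient `C(z,k) = z(z−1)⋯(z−k+1)/k!` over `ℂ`. -/
noncomputable def gbinom (z : ℂ) (k : ℕ) : ℂ :=
  (∏ i ∈ Finset.range k, (z - (i : ℂ))) / (k.factorial : ℂ)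

/-- Generalized binomial coefficient `C(z,k) = z(z−1)⋯(z−k+1)/k!` over `ℝ`. -/
noncomputable def gbinomR (z : ℝ) (k : ℕ) : ℝ :=
  (∏ i ∈ Finset.range k, (z - (i : ℝ))) / (k.factorial : ℝ)

/-- Rising factorial (Pochhammer symbol) `(z)_k = z(z+1)⋯(z+k−1)` over `ℂ`. -/
noncomputable def poch (z : ℂ) (k : ℕ) : ℂ := ∏ i ∈ Finset.range k, (z + (i : ℂ))

/-- `G_α(l) = (1/(l+1))·∑_{k=0}^{l} C(l+1,k+1)·C(−1−α,k)·2^k = ₂F₁(−l, 1+α; 2; 2)`, over `ℂ`. -/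
noncomputable def Gc (α : ℝ) (l : ℕ) : ℂ :=
  (1 / ((l : ℂ) + 1)) * ∑ k ∈ Finset.range (l + 1),
    gbinom ((l : ℂ) + 1) (k + 1) * gbinom (-1 - (α : ℂ)) k * 2 ^ k

/-- `G_α(l) = (1/(l+1))·∑_{k=0}^{l} C(l+1,k+1)·C(−1−α,k)·2^k = ₂F₁(−l, 1+α; 2; 2)`, over `ℝ`. -/
noncomputable def GR (α : ℝ) (l : ℕ) : ℝ :=
  (1 / ((l : ℝ) + 1)) * ∑ k ∈ Finset.range (l + 1),
    gbinomR ((l : ℝ) + 1) (k + 1) * gbinomR (-1 - α) k * 2 ^ k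

/-- `H_α(l) = ∑_{k=0}^{l} C(l,k)·C(−1−α,k)·2^k = ₂F₁(−l, 1+α; 1; 2)`, over `ℂ`. -/
noncomputable def Hc (α : ℝ) (l : ℕ) : ℂ :=
  ∑ k ∈ Finset.range (l + 1), gbinom (l : ℂ) k * gbinom (-1 - (α : ℂ)) k * 2 ^ k

/-- `H_α(l) = ∑_{k=0}^{l} C(l,k)·C(−1−α,k)·2^k = ₂F₁(−l, 1+α; 1; 2)`, over `ℝ`. -/
noncomputable def HR (α : ℝ) (l : ℕ) : ℝ :=
  ∑ k ∈ Finset.range (l + 1), gbinomR (l : ℝ) k * gbinomR (-1 - α) k * 2 ^ k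

/-- `arccot(x) = π/2 − arctan(x) ∈ (0,π)`. -/
noncomputable def arccot (x : ℝ) : ℝ := Real.pi / 2 - Real.arctan x


/-- The dominating function. -/
lemma gn_bound_integrable (α : ℝ) (hα : α ∈ Set.Ioo (0 : ℝ) 2) :
    IntegrableOn (fun y : ℝ => (y ^ α)⁻¹ * (y * ((1 + y)⁻¹) ^ 3)) (Set.Ioi 0) := by
  obtain ⟨h0, h2⟩ := hα
  have hm : Measurable (fun y : ℝ => (y ^ α)⁻¹ * (y * ((1 + y)⁻¹) ^ 3)) := by fun_prop
  rw [← Set.Ioc_union_Ioi_eq_Ioi (zero_le_one' ℝ)]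
  refine IntegrableOn.union ?_ ?_
  · have h1 : IntegrableOn (fun y : ℝ => y ^ (1 - α)) (Set.Ioc 0 1) := by
      rw [← intervalIntegrable_iff_integrableOn_Ioc_of_le zero_le_one]
      exact intervalIntegral.intervalIntegrable_rpow' (by linarith)
    refine Integrable.mono' h1 hm.aestronglyMeasurable ?_
    refine (ae_restrict_iff' measurableSet_Ioc).2 (Filter.Eventually.of_forall ?_)
    intro y hy
    have hy0 : 0 < y := hy.1
    rw [Real.norm_of_nonneg (by positivity), Real.rpow_sub hy0, Real.rpow_one, div_eq_inv_mul]
    have : ((1 + y)⁻¹) ^ 3 ≤ 1 := pow_le_one₀ (by positivity) (inv_le_one_of_one_le₀ (by linarith))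
    have hp : 0 < (y ^ α)⁻¹ := by positivity
    nlinarith [mul_pos hp hy0]
  · have h1 : IntegrableOn (fun y : ℝ => y ^ (-2 - α)) (Set.Ioi 1) :=
      integrableOn_Ioi_rpow_of_lt (by linarith) one_pos
    refine Integrable.mono' h1 hm.aestronglyMeasurable ?_
    refine (ae_restrict_iff' measurableSet_Ioi).2 (Filter.Eventually.of_forall ?_)
    intro y hy
    have hy0 : 0 < y := lt_trans one_pos hy
    rw [Real.norm_of_nonneg (by positivity), Real.rpow_sub hy0, div_eq_inv_mul]
    have e : y ^ (-2 : ℝ) = y * (y⁻¹) ^ 3 := by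
      rw [Real.rpow_neg hy0.le]
      field_simp
      norm_num
    rw [e]
    gcongr
    linarith

/-- Building block `p^m - q^m`. -/
noncomputable def gnF (α : ℝ) (m : ℕ) (w : ℂ) (y : ℝ) : ℂ :=
  (((y ^ α : ℝ) : ℂ))⁻¹ *
    (((y : ℂ) - Complex.I * w)⁻¹ ^ m - (-(y : ℂ) - Complex.I * w)⁻¹ ^ m)

lemma gn_ne (w : ℂ) (hw : 0 < w.re) (y : ℝ) : (y : ℂ) - Complex.I * w ≠ 0 := by
  intro h
  have := congrArg Complex.im h
  simp at this
  linarith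

lemma gn_inv_bound (δ R : ℝ) (hδ : 0 < δ) (hR : 0 ≤ R) (w : ℂ) (hw : δ ≤ w.re)
    (hw2 : |w.im| ≤ R) (y : ℝ) :
    ‖((y : ℂ) - Complex.I * w)⁻¹‖ ≤ ((1 + R) / δ + 1) * (1 + |y|)⁻¹ := by
  have hne := gn_ne w (by linarith) y
  rw [norm_inv]
  have hpos : 0 < ‖(y : ℂ) - Complex.I * w‖ := norm_pos_iff.2 hne
  have h1 : δ ≤ ‖(y : ℂ) - Complex.I * w‖ := by
    have := Complex.abs_im_le_norm ((y : ℂ) - Complex.I * w)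
    simp at this
    exact le_trans hw (le_trans (le_abs_self _) this)
  have h2 : |y| - R ≤ ‖(y : ℂ) - Complex.I * w‖ := by
    have := Complex.abs_re_le_norm ((y : ℂ) - Complex.I * w)
    simp at this
    have h3 := abs_sub_abs_le_abs_sub y (-w.im)
    rw [abs_neg, sub_neg_eq_add] at h3
    linarith
  rw [← div_eq_mul_inv, inv_eq_one_div, div_le_div_iff₀ hpos (by positivity)]
  have h3 : (1 + R) ≤ (1 + R) / δ * ‖(y : ℂ) - Complex.I * w‖ := by
    calc (1 + R) = (1 + R) / δ * δ := by field_simp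
      _ ≤ _ := by gcongr
  linarith

lemma gn_pow_diff (p q : ℂ) (C : ℝ) (hp : ‖p‖ ≤ C) (hq : ‖q‖ ≤ C) (m : ℕ) :
    ‖p ^ m - q ^ m‖ ≤ m * C ^ (m - 1) * ‖p - q‖ := by
  have hC : 0 ≤ C := le_trans (norm_nonneg _) hp
  rw [← Commute.geom_sum₂_mul (Commute.all p q) m, norm_mul]
  gcongr
  calc _ ≤ ∑ i ∈ range m, ‖p ^ i * q ^ (m - 1 - i)‖ := norm_sum_le _ _
    _ ≤ ∑ i ∈ range m, C ^ (m - 1) := by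
      refine Finset.sum_le_sum fun i hi => ?_
      have hi' := Finset.mem_range.1 hi
      rw [norm_mul, norm_pow, norm_pow]
      calc _ ≤ C ^ i * C ^ (m - 1 - i) := by gcongr
        _ = C ^ (m - 1) := by rw [← pow_add]; congr 1; omega
    _ = _ := by simp

lemma gnF_bound (α : ℝ) (δ R : ℝ) (hδ : 0 < δ) (hR : 0 ≤ R) (m : ℕ) (hm : 2 ≤ m) :
    ∃ K : ℝ, ∀ w : ℂ, δ ≤ w.re → |w.im| ≤ R → ∀ y : ℝ, 0 < y →
      ‖gnF α m w y‖ ≤ K * ((y ^ α)⁻¹ * (y * ((1 + y)⁻¹) ^ 3)) := by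
  set D : ℝ := (1 + R) / δ + 1 with hD
  have hDpos : 0 < D := by positivity
  refine ⟨m * D ^ (m - 1) * (2 * D ^ 2), fun w hw1 hw2 y hy => ?_⟩
  have hp := gn_inv_bound δ R hδ hR w hw1 hw2 y
  have hq := gn_inv_bound δ R hδ hR w hw1 hw2 (-y)
  rw [abs_neg] at hq
  rw [abs_of_pos hy, ← hD] at hp hq
  push_cast at hq
  have np := gn_ne w (by linarith) y
  have nq := gn_ne w (by linarith) (-y)
  push_cast at nq
  have h := gn_pow_diff _ _ _ hp hq m
  have hpq : ‖((y : ℂ) - Complex.I * w)⁻¹ - (-(y : ℂ) - Complex.I * w)⁻¹‖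
      ≤ 2 * y * (D * (1 + y)⁻¹) * (D * (1 + y)⁻¹) := by
    have : ((y : ℂ) - Complex.I * w)⁻¹ - (-(y : ℂ) - Complex.I * w)⁻¹
      = -((2 * y : ℝ) : ℂ) * ((y : ℂ) - Complex.I * w)⁻¹ * (-(y : ℂ) - Complex.I * w)⁻¹ := by
      rw [inv_sub_inv np nq]
      push_cast
      field_simp
      ring
    rw [this, norm_mul, norm_mul, norm_neg, Complex.norm_real, Real.norm_of_nonneg (by positivity)]
    gcongr
  unfold gnF
  rw [norm_mul, norm_inv, Complex.norm_real, Real.norm_of_nonneg (by positivity)]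
  have h1 : ((1 + y)⁻¹) ^ (m - 1) ≤ (1 + y)⁻¹ := by
    apply pow_le_of_le_one (by positivity) (inv_le_one_of_one_le₀ (by linarith)) (by omega)
  calc _ ≤ (y ^ α)⁻¹ * (m * (D * (1 + y)⁻¹) ^ (m - 1) *
        (2 * y * (D * (1 + y)⁻¹) * (D * (1 + y)⁻¹))) := by
        gcongr
        refine h.trans ?_
        gcongr
    _ = m * D ^ (m - 1) * (2 * D ^ 2) * ((y ^ α)⁻¹ * (y * (((1 + y)⁻¹) ^ (m - 1) * ((1 + y)⁻¹) ^ 2))) := by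
        rw [mul_pow]; ring
    _ ≤ m * D ^ (m - 1) * (2 * D ^ 2) * ((y ^ α)⁻¹ * (y * ((1 + y)⁻¹ * ((1 + y)⁻¹) ^ 2))) := by
        gcongr
    _ = _ := by ring

lemma gnF_meas (α : ℝ) (m : ℕ) (w : ℂ) : Measurable (gnF α m w) := by
  unfold gnF
  fun_prop

lemma gnF_integrable (α : ℝ) (hα : α ∈ Set.Ioo (0 : ℝ) 2) (m : ℕ) (hm : 2 ≤ m) (w : ℂ)
    (hw : 0 < w.re) : IntegrableOn (gnF α m w) (Set.Ioi 0) := by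
  obtain ⟨K, hK⟩ := gnF_bound α w.re |w.im| hw (abs_nonneg _) m hm
  refine Integrable.mono' ((gn_bound_integrable α hα).const_mul K)
    (gnF_meas α m w).aestronglyMeasurable ?_
  refine (ae_restrict_iff' measurableSet_Ioi).2 (Filter.Eventually.of_forall ?_)
  intro y hy
  exact hK w le_rfl le_rfl y hy

lemma gnF_hasDerivAt (α : ℝ) (m : ℕ) (w : ℂ) (hw : 0 < w.re) (y : ℝ) :
    HasDerivAt (fun w => gnF α m w y) (Complex.I * m * gnF α (m + 1) w y) w := by
  have key : ∀ y : ℝ, HasDerivAt (fun w : ℂ => ((y : ℂ) - Complex.I * w)⁻¹ ^ m)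
      (Complex.I * m * ((y : ℂ) - Complex.I * w)⁻¹ ^ (m + 1)) w := by
    intro y
    have np := gn_ne w hw y
    have h1 : HasDerivAt (fun w : ℂ => (y : ℂ) - Complex.I * w) (-(Complex.I * 1)) w :=
      ((hasDerivAt_id w).const_mul Complex.I).const_sub _
    have h2 := (h1.fun_inv np).fun_pow m
    refine h2.congr_deriv ?_
    rcases m with _ | m
    · simp
    · simp only [Nat.add_sub_cancel, inv_pow]
      push_cast
      field_simp
      ring
  have h1 := key y
  have h2 := key (-y)
  push_cast at h2
  have h3 := (h1.sub h2).const_mul (((y ^ α : ℝ) : ℂ))⁻¹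
  unfold gnF
  refine h3.congr_deriv ?_
  ring

lemma gn_integral_hasDerivAt (α : ℝ) (hα : α ∈ Set.Ioo (0 : ℝ) 2) (m : ℕ) (hm : 2 ≤ m) (w : ℂ)
    (hw : 0 < w.re) :
    HasDerivAt (fun w => ∫ y in Set.Ioi (0 : ℝ), gnF α m w y)
      (Complex.I * m * ∫ y in Set.Ioi (0 : ℝ), gnF α (m + 1) w y) w := by
  obtain ⟨K, hK⟩ := gnF_bound α (w.re / 2) (|w.im| + 1) (by linarith) (by positivity) (m + 1)
    (by omega)
  let s : Set ℂ := {z | w.re / 2 < z.re} ∩ {z | |z.im| < |w.im| + 1}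
  have hs : s ∈ nhds w := by
    refine IsOpen.mem_nhds (IsOpen.inter ?_ ?_) ⟨?_, ?_⟩
    · exact isOpen_lt continuous_const Complex.continuous_re
    · exact isOpen_lt (Complex.continuous_im.abs) continuous_const
    · simp; linarith
    · simp
  have := (hasDerivAt_integral_of_dominated_loc_of_deriv_le (μ := volume.restrict (Set.Ioi (0 : ℝ)))
    (F := fun w y => gnF α m w y) (F' := fun w y => Complex.I * m * gnF α (m + 1) w y)
    (bound := fun y => m * (K * ((y ^ α)⁻¹ * (y * ((1 + y)⁻¹) ^ 3)))) hs
    (Filter.Eventually.of_forall fun z => (gnF_meas α m z).aestronglyMeasurable)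
    (gnF_integrable α hα m hm w hw)
    ((gnF_meas α (m + 1) w).const_mul _).aestronglyMeasurable
    ((ae_restrict_iff' measurableSet_Ioi).2 (Filter.Eventually.of_forall ?_))
    (((gn_bound_integrable α hα).const_mul K).const_mul _)
    (Filter.Eventually.of_forall ?_)).2
  · rwa [integral_const_mul] at this
  · intro y hy z hz
    rw [norm_mul, norm_mul, Complex.norm_I, one_mul, Complex.norm_natCast]
    gcongr
    exact hK z hz.1.le hz.2.le y hy
  · intro y z hz
    have h1 : w.re / 2 < z.re := hz.1
    exact gnF_hasDerivAt α m z (by linarith) y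

lemma gn_beta (α : ℝ) (hα : α ∈ Set.Ioo (0 : ℝ) 2) :
    ∫ u in Set.Ioo (0 : ℝ) 1, ((u ^ (-(α / 2)) * (1 - u) ^ (α / 2) : ℝ) : ℂ)
      = Real.pi * (α / 2) / Real.sin (Real.pi * α / 2) := by
  obtain ⟨h0, h2⟩ := hα
  have h := Complex.betaIntegral_eq_Gamma_mul_div (1 - α / 2 : ℂ) (1 + α / 2 : ℂ)
    (by simp; linarith) (by simp; linarith)
  have hb : Complex.betaIntegral (1 - α / 2 : ℂ) (1 + α / 2 : ℂ) =
    ∫ u in Set.Ioo (0 : ℝ) 1, ((u ^ (-(α / 2)) * (1 - u) ^ (α / 2) : ℝ) : ℂ) := by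
    rw [Complex.betaIntegral, intervalIntegral.integral_of_le zero_le_one,
      integral_Ioc_eq_integral_Ioo]
    refine setIntegral_congr_fun measurableSet_Ioo fun u hu => ?_
    have hu0 : 0 ≤ u := hu.1.le
    have hu1 : 0 ≤ 1 - u := by linarith [hu.2]
    rw [Complex.ofReal_mul, Complex.ofReal_cpow hu0, Complex.ofReal_cpow hu1]
    push_cast
    congr 2 <;> ring
  rw [← hb, h]
  have h3 : (1 - α / 2 : ℂ) + (1 + α / 2 : ℂ) = ((1 : ℕ) : ℂ) + 1 := by push_cast; ring
  rw [h3, Complex.Gamma_nat_eq_factorial, add_comm (1 : ℂ) (α / 2 : ℂ), Complex.Gamma_add_one _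
    (by simp; linarith)]
  have h4 := Complex.Gamma_mul_Gamma_one_sub (α / 2 : ℂ)
  have h5 : (Real.sin (Real.pi * α / 2) : ℂ) = Complex.sin (Real.pi * (α / 2)) := by
    push_cast; congr 1; ring
  rw [h5, Nat.factorial_one, Nat.cast_one, div_one, mul_left_comm, mul_comm (Complex.Gamma _), h4]
  ring

lemma gn_base_real (α : ℝ) (hα : α ∈ Set.Ioo (0 : ℝ) 2) (w : ℝ) (hw : 0 < w) :
    ∫ y in Set.Ioi (0 : ℝ), gnF α 2 w y =
      Complex.I * Real.pi * α / Real.sin (Real.pi * α / 2) * (w : ℂ) ^ (-1 - (α : ℂ)) := by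
  have himg : (fun y : ℝ => y ^ 2 / (y ^ 2 + w ^ 2)) '' Set.Ioi 0 = Set.Ioo 0 1 := by
    ext u
    constructor
    · rintro ⟨y, hy, rfl⟩
      have hy : 0 < y := hy
      refine ⟨by positivity, ?_⟩
      simp only
      rw [div_lt_one (by positivity)]
      nlinarith
    · rintro ⟨h0, h1⟩
      have h1' : 0 < 1 - u := by linarith
      refine ⟨w * Real.sqrt (u / (1 - u)), ?_, ?_⟩
      · have : 0 < u / (1 - u) := by positivity
        exact mul_pos hw (Real.sqrt_pos.2 this)
      · simp only
        rw [mul_pow, Real.sq_sqrt (by positivity)]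
        field_simp
        ring
  have hinj : Set.InjOn (fun y : ℝ => y ^ 2 / (y ^ 2 + w ^ 2)) (Set.Ioi 0) := by
    intro a ha b hb hab
    have ha : 0 < a := ha
    have hb : 0 < b := hb
    simp only at hab
    rw [div_eq_div_iff (by positivity) (by positivity)] at hab
    have h1 : (a ^ 2 - b ^ 2) * w ^ 2 = 0 := by linarith
    have h2 : a ^ 2 = b ^ 2 := by
      rcases mul_eq_zero.1 h1 with h | h
      · linarith
      · exact absurd h (by positivity)
    exact (pow_left_inj₀ ha.le hb.le two_ne_zero).1 h2
  have hder : ∀ y ∈ Set.Ioi (0 : ℝ), HasDerivWithinAt (fun y : ℝ => y ^ 2 / (y ^ 2 + w ^ 2))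
      (2 * y * w ^ 2 / (y ^ 2 + w ^ 2) ^ 2) (Set.Ioi 0) y := by
    intro y hy
    have h1 : HasDerivAt (fun y : ℝ => y ^ 2) (2 * y) y := by simpa using hasDerivAt_pow 2 y
    refine ((h1.fun_div (h1.add_const (w ^ 2)) (by positivity)).congr_deriv ?_).hasDerivWithinAt
    congr 1
    ring
  have hcv := integral_image_eq_integral_abs_deriv_smul measurableSet_Ioi hder hinj
    (fun u => ((u ^ (-(α / 2)) * (1 - u) ^ (α / 2) : ℝ) : ℂ))
  rw [himg, gn_beta α hα] at hcv
  have hcong : ∀ y ∈ Set.Ioi (0 : ℝ), gnF α 2 w y = (2 * Complex.I * ((w ^ (-1 - α) : ℝ) : ℂ)) *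
      (|2 * y * w ^ 2 / (y ^ 2 + w ^ 2) ^ 2| • (((y ^ 2 / (y ^ 2 + w ^ 2)) ^ (-(α / 2)) *
        (1 - y ^ 2 / (y ^ 2 + w ^ 2)) ^ (α / 2) : ℝ) : ℂ)) := by
    intro y hy
    have hy : 0 < y := hy
    have e1 : 1 - y ^ 2 / (y ^ 2 + w ^ 2) = w ^ 2 / (y ^ 2 + w ^ 2) := by field_simp; ring
    have e2 : ∀ t : ℝ, 0 < t → (t ^ 2) ^ (α / 2) = t ^ α := by
      intro t ht
      rw [← Real.rpow_natCast, ← Real.rpow_mul ht.le]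
      congr 1; push_cast; ring
    have e3 : (y ^ 2 / (y ^ 2 + w ^ 2)) ^ (-(α / 2)) *
        (1 - y ^ 2 / (y ^ 2 + w ^ 2)) ^ (α / 2) = (y ^ α)⁻¹ * w ^ α := by
      rw [e1, Real.rpow_neg (by positivity), Real.div_rpow (by positivity) (by positivity),
        Real.div_rpow (by positivity) (by positivity), e2 y hy, e2 w hw]
      have : 0 < (y ^ 2 + w ^ 2) ^ (α / 2) := by positivity
      field_simp
    have e4 : w ^ (-1 - α) = w⁻¹ * (w ^ α)⁻¹ := by
      rw [Real.rpow_sub hw, Real.rpow_neg_one, div_eq_mul_inv]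
    rw [e3, e4, abs_of_pos (by positivity), Complex.real_smul]
    unfold gnF
    have np := gn_ne (w : ℂ) (by simpa using hw) y
    have nq := gn_ne (w : ℂ) (by simpa using hw) (-y)
    push_cast at nq
    have hwc : (w : ℂ) ≠ 0 := by exact_mod_cast hw.ne'
    have hwa : ((w ^ α : ℝ) : ℂ) ≠ 0 := by
      have : 0 < w ^ α := by positivity
      exact_mod_cast this.ne'
    have hsq : ((y : ℂ) ^ 2 + (w : ℂ) ^ 2) ≠ 0 := by
      have : 0 < y ^ 2 + w ^ 2 := by positivity
      exact_mod_cast this.ne'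
    have e5 : ((y : ℂ) - Complex.I * w)⁻¹ ^ 2 - (-(y : ℂ) - Complex.I * w)⁻¹ ^ 2
       = 4 * Complex.I * y * w / (y ^ 2 + w ^ 2) ^ 2 := by
      have e6 : (y : ℂ) ^ 2 + w ^ 2 = -(((y : ℂ) - Complex.I * w) * (-(y : ℂ) - Complex.I * w)) := by
        ring_nf; rw [Complex.I_sq]; ring
      rw [e6]
      field_simp
      ring
    rw [e5]
    push_cast
    field_simp
    ring
  rw [setIntegral_congr_fun measurableSet_Ioi hcong, integral_const_mul, ← hcv,
    Complex.ofReal_cpow hw.le]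
  push_cast
  ring

lemma gn_base (α : ℝ) (hα : α ∈ Set.Ioo (0 : ℝ) 2) (w : ℂ) (hw : 0 < w.re) :
    ∫ y in Set.Ioi (0 : ℝ), gnF α 2 w y =
      Complex.I * Real.pi * α / Real.sin (Real.pi * α / 2) * w ^ (-1 - (α : ℂ)) := by
  have hU : IsOpen {z : ℂ | 0 < z.re} := isOpen_lt continuous_const Complex.continuous_re
  have hconv : Convex ℝ {z : ℂ | 0 < z.re} := convex_halfSpace_re_gt 0
  have h1 : AnalyticOnNhd ℂ (fun w => ∫ y in Set.Ioi (0 : ℝ), gnF α 2 w y) {z : ℂ | 0 < z.re} := by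
    refine DifferentiableOn.analyticOnNhd (fun z hz => ?_) hU
    exact (gn_integral_hasDerivAt α hα 2 le_rfl z hz).differentiableAt.differentiableWithinAt
  have h2 : AnalyticOnNhd ℂ (fun w : ℂ => Complex.I * Real.pi * α / Real.sin (Real.pi * α / 2) *
      w ^ (-1 - (α : ℂ))) {z : ℂ | 0 < z.re} := by
    refine DifferentiableOn.analyticOnNhd (fun z hz => ?_) hU
    have : z ∈ Complex.slitPlane := Or.inl hz
    exact ((differentiableAt_id.cpow (differentiableAt_const _) this).const_mul
      _).differentiableWithinAt
  refine h1.eqOn_of_preconnected_of_frequently_eq h2 hconv.isPreconnected (z₀ := 1) (by simp) ?_ hw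
  have ht : Filter.Tendsto (fun t : ℝ => (t : ℂ)) (nhdsWithin 1 {1}ᶜ) (nhdsWithin 1 {1}ᶜ) := by
    refine tendsto_nhdsWithin_of_tendsto_nhds_of_eventually_within _ ?_ ?_
    · have : Filter.Tendsto (fun t : ℝ => (t : ℂ)) (nhds 1) (nhds ((1 : ℝ) : ℂ)) :=
        Complex.continuous_ofReal.continuousAt
      rw [Complex.ofReal_one] at this
      exact this.mono_left nhdsWithin_le_nhds
    · filter_upwards [self_mem_nhdsWithin] with t ht
      simpa using ht
  refine ht.frequently (Filter.Eventually.frequently ?_)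
  have : ∀ᶠ t : ℝ in nhdsWithin 1 {1}ᶜ, 0 < t :=
    nhdsWithin_le_nhds (lt_mem_nhds one_pos)
  filter_upwards [this] with t ht
  exact gn_base_real α hα t ht

lemma gbinom_succ (z : ℂ) (k : ℕ) : gbinom z (k + 1) = gbinom z k * (z - k) / (k + 1) := by
  unfold gbinom
  rw [Finset.prod_range_succ, Nat.factorial_succ]
  have : ((k.factorial : ℕ) : ℂ) ≠ 0 := by exact_mod_cast k.factorial_ne_zero
  have : (k : ℂ) + 1 ≠ 0 := by exact_mod_cast k.succ_ne_zero
  push_cast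
  field_simp

lemma gn_all (α : ℝ) (hα : α ∈ Set.Ioo (0 : ℝ) 2) (k : ℕ) : ∀ w : ℂ, 0 < w.re →
    ∫ y in Set.Ioi (0 : ℝ), gnF α (k + 2) w y =
      Complex.I * Real.pi * α / Real.sin (Real.pi * α / 2) *
        ((-Complex.I) ^ k * gbinom (-1 - (α : ℂ)) k / (k + 1)) * w ^ (-1 - (α : ℂ) - k) := by
  induction k with
  | zero =>
    intro w hw
    rw [gn_base α hα w hw]
    simp [gbinom]
  | succ k ih =>
    intro w hw
    set c : ℂ := Complex.I * Real.pi * α / Real.sin (Real.pi * α / 2)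
    have h1 := gn_integral_hasDerivAt α hα (k + 2) (by omega) w hw
    have hsl : w ∈ Complex.slitPlane := Or.inl hw
    have h2 := ((hasDerivAt_id w).cpow_const (c := -1 - (α : ℂ) - k) hsl).const_mul
      (c * ((-Complex.I) ^ k * gbinom (-1 - (α : ℂ)) k / (k + 1)))
    have hU : IsOpen {z : ℂ | 0 < z.re} := isOpen_lt continuous_const Complex.continuous_re
    have h3 := h2.congr_of_eventuallyEq
      (f₁ := fun w => ∫ y in Set.Ioi (0 : ℝ), gnF α (k + 2) w y)
      (Filter.eventually_of_mem (hU.mem_nhds hw) (fun z hz => ih z hz))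
    have h4 := h1.unique h3
    have hk : ((k : ℂ) + 2) ≠ 0 := by exact_mod_cast (Nat.succ_ne_zero (k + 1))
    have hk1 : ((k : ℂ) + 1) ≠ 0 := by exact_mod_cast (Nat.succ_ne_zero k)
    have hI := Complex.I_ne_zero
    have hI2 := Complex.I_sq
    have e : k + 1 + 2 = k + 2 + 1 := by ring
    rw [e]
    have hne : Complex.I * ((k + 2 : ℕ) : ℂ) ≠ 0 := by push_cast; exact mul_ne_zero hI hk
    apply mul_left_cancel₀ hne
    rw [h4, gbinom_succ]
    have e2 : -1 - (α : ℂ) - ((k + 1 : ℕ) : ℂ) = -1 - (α : ℂ) - k - 1 := by push_cast; ring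
    have e3 : (k : ℂ) + 1 + 1 = k + 2 := by ring
    simp only [id]
    rw [e2, pow_succ]
    push_cast
    rw [e3]
    field_simp
    ring_nf
    simp only [hI2]
    ring

lemma gn_expand (p : ℂ) (hp : p ≠ 0) (N : ℕ) :
    (p + 2 * Complex.I) ^ N / p ^ (N + 2) =
      ∑ k ∈ Finset.range (N + 1), (N.choose k : ℂ) * (2 * Complex.I) ^ k * p⁻¹ ^ (k + 2) := by
  rw [add_comm p, add_pow, Finset.sum_div]
  refine Finset.sum_congr rfl fun k hk => ?_
  have hk' : k ≤ N := by have := Finset.mem_range.1 hk; omega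
  have : p ^ (N + 2) = p ^ (N - k) * p ^ (k + 2) := by rw [← pow_add]; congr 1; omega
  rw [this, inv_pow]
  field_simp

lemma gbinom_choose (N k : ℕ) :
    gbinom ((N + 1 : ℕ) : ℂ) (k + 1) = (N + 1) * (N.choose k : ℂ) / (k + 1) := by
  have h : ∀ M j : ℕ, gbinom (M : ℂ) j = (M.choose j : ℂ) := by
    intro M j
    unfold gbinom
    rw [Nat.cast_choose_eq_descPochhammer_div, descPochhammer_eval_eq_prod_range]
  rw [h, eq_div_iff (by exact_mod_cast k.succ_ne_zero)]
  have := Nat.add_one_mul_choose_eq N k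
  exact_mod_cast this.symm

lemma gn_pointwise (α : ℝ) (N : ℕ) (x y : ℝ) :
    (((y : ℂ) + (x : ℂ) + Complex.I) ^ N * ((y : ℂ) - (x : ℂ) + Complex.I) ^ (N + 2) -
            ((y : ℂ) - (x : ℂ) - Complex.I) ^ N *
              ((y : ℂ) + (x : ℂ) - Complex.I) ^ (N + 2)) /
          (((y ^ α : ℝ) : ℂ) * ((y : ℂ) + (x : ℂ) - Complex.I) ^ (N + 2) *
            ((y : ℂ) - (x : ℂ) + Complex.I) ^ (N + 2)) =
    ∑ k ∈ Finset.range (N + 1), (N.choose k : ℂ) * (2 * Complex.I) ^ k *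
      gnF α (k + 2) (Complex.I * x + 1) y := by
  have hw : 0 < (Complex.I * x + 1 : ℂ).re := by simp
  have np := gn_ne _ hw y
  have nq := gn_ne _ hw (-y)
  push_cast at nq
  have h1 := gn_expand _ np N
  have h2 := gn_expand _ nq N
  have hR : ∑ k ∈ Finset.range (N + 1), (N.choose k : ℂ) * (2 * Complex.I) ^ k *
      gnF α (k + 2) (Complex.I * x + 1) y = (((y ^ α : ℝ) : ℂ))⁻¹ *
      (((y : ℂ) - Complex.I * (Complex.I * x + 1) + 2 * Complex.I) ^ N /
        ((y : ℂ) - Complex.I * (Complex.I * x + 1)) ^ (N + 2) -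
      (-(y : ℂ) - Complex.I * (Complex.I * x + 1) + 2 * Complex.I) ^ N /
        (-(y : ℂ) - Complex.I * (Complex.I * x + 1)) ^ (N + 2)) := by
    rw [h1, h2, ← Finset.sum_sub_distrib, Finset.mul_sum]
    refine Finset.sum_congr rfl fun k _ => ?_
    unfold gnF
    ring
  have a1 : (y : ℂ) - Complex.I * (Complex.I * x + 1) = y + x - Complex.I := by
    ring_nf; rw [Complex.I_sq]; ring
  have a2 : -(y : ℂ) - Complex.I * (Complex.I * x + 1) = -(y - x + Complex.I) := by
    ring_nf; rw [Complex.I_sq]; ring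
  rw [hR]
  rw [a1] at np ⊢
  rw [a2] at nq ⊢
  have nq' := neg_ne_zero.1 nq
  have a3 : (y : ℂ) + x - Complex.I + 2 * Complex.I = y + x + Complex.I := by ring
  have a4 : -((y : ℂ) - x + Complex.I) + 2 * Complex.I = -(y - x - Complex.I) := by ring
  have a5 : (-((y : ℂ) - x - Complex.I)) ^ N / (-((y : ℂ) - x + Complex.I)) ^ (N + 2) =
      ((y : ℂ) - x - Complex.I) ^ N / ((y : ℂ) - x + Complex.I) ^ (N + 2) := by
    rw [neg_pow, neg_pow ((y : ℂ) - x + Complex.I), pow_add (-1 : ℂ), neg_one_sq, mul_one]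
    exact mul_div_mul_left _ _ (pow_ne_zero _ (by norm_num))
  rw [a3, a4, a5, div_sub_div _ _ (pow_ne_zero _ np) (pow_ne_zero _ nq'), ← div_eq_inv_mul,
    div_div]
  congr 1 <;> ring

theorem integral_gn (α : ℝ) (hα : α ∈ Set.Ioo (0 : ℝ) 2) (n : ℕ) (hn : 1 ≤ n) (x : ℝ) :
    IntegrableOn (fun y : ℝ =>
        (((y : ℂ) + (x : ℂ) + Complex.I) ^ (n - 1) * ((y : ℂ) - (x : ℂ) + Complex.I) ^ (n + 1) -
            ((y : ℂ) - (x : ℂ) - Complex.I) ^ (n - 1) *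
              ((y : ℂ) + (x : ℂ) - Complex.I) ^ (n + 1)) /
          (((y ^ α : ℝ) : ℂ) * ((y : ℂ) + (x : ℂ) - Complex.I) ^ (n + 1) *
            ((y : ℂ) - (x : ℂ) + Complex.I) ^ (n + 1))) (Set.Ioi 0) ∧
    (∫ y in Set.Ioi (0 : ℝ),
        (((y : ℂ) + (x : ℂ) + Complex.I) ^ (n - 1) * ((y : ℂ) - (x : ℂ) + Complex.I) ^ (n + 1) -
            ((y : ℂ) - (x : ℂ) - Complex.I) ^ (n - 1) *
              ((y : ℂ) + (x : ℂ) - Complex.I) ^ (n + 1)) /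
          (((y ^ α : ℝ) : ℂ) * ((y : ℂ) + (x : ℂ) - Complex.I) ^ (n + 1) *
            ((y : ℂ) - (x : ℂ) + Complex.I) ^ (n + 1))) =
      ((Real.pi : ℂ) * (α : ℂ) * Complex.exp (-Complex.I * (Real.pi : ℂ) * (α : ℂ) / 2) *
            Complex.I ^ ((1 : ℂ) + (α : ℂ)) /
          ((Real.sin (Real.pi * α / 2) : ℂ) *
            (Complex.I * (x : ℂ) + 1) ^ ((1 : ℂ) + (α : ℂ)))) *
        ((1 / (n : ℂ)) *
          ∑ k ∈ Finset.range n,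
            gbinom (n : ℂ) (k + 1) * gbinom (-1 - (α : ℂ)) k *
              (2 / (Complex.I * (x : ℂ) + 1)) ^ k) := by
  obtain ⟨N, rfl⟩ : ∃ N, n = N + 1 := ⟨n - 1, by omega⟩
  simp only [Nat.add_sub_cancel, show N + 1 + 1 = N + 2 from rfl, gn_pointwise]
  have hw : 0 < (Complex.I * x + 1 : ℂ).re := by simp
  have hint : ∀ k ∈ Finset.range (N + 1), IntegrableOn (fun y : ℝ => (N.choose k : ℂ) *
      (2 * Complex.I) ^ k * gnF α (k + 2) (Complex.I * x + 1) y) (Set.Ioi 0) := fun k _ =>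
    (gnF_integrable α hα (k + 2) (by omega) _ hw).const_mul _
  refine ⟨integrable_finsetSum _ hint, ?_⟩
  rw [integral_finsetSum _ hint, Finset.mul_sum, Finset.mul_sum]
  refine Finset.sum_congr rfl fun k _ => ?_
  rw [integral_const_mul, gn_all α hα k _ hw, gbinom_choose]
  set w : ℂ := Complex.I * x + 1
  have hw0 : w ≠ 0 := by intro h; rw [h] at hw; simp at hw
  have hI : Complex.exp (-Complex.I * (Real.pi : ℂ) * (α : ℂ) / 2) *
            Complex.I ^ ((1 : ℂ) + (α : ℂ)) = Complex.I := by
    rw [Complex.cpow_def_of_ne_zero Complex.I_ne_zero, Complex.log_I, ← Complex.exp_add]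
    have : -Complex.I * (Real.pi : ℂ) * (α : ℂ) / 2 + Real.pi / 2 * Complex.I * (1 + α)
      = Real.pi / 2 * Complex.I := by ring
    rw [this, Complex.exp_pi_div_two_mul_I]
  have hpow : w ^ (-1 - (α : ℂ) - k) = (w ^ ((1 : ℂ) + α))⁻¹ * (w ^ k)⁻¹ := by
    rw [Complex.cpow_sub _ _ hw0, Complex.cpow_natCast, ← Complex.cpow_neg, div_eq_mul_inv]
    congr 2
    ring
  have hN : (N : ℂ) + 1 ≠ 0 := by exact_mod_cast N.succ_ne_zero
  have hk : (k : ℂ) + 1 ≠ 0 := by exact_mod_cast k.succ_ne_zero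
  have hII : Complex.I ^ k * (-Complex.I) ^ k = 1 := by
    rw [← mul_pow]; simp
  rw [hpow, mul_assoc ((Real.pi : ℂ) * α), hI, mul_pow, div_pow]
  push_cast
  have hNN : (1 / ((N : ℂ) + 1)) * ((N + 1) * (N.choose k : ℂ) / (k + 1)) =
    (N.choose k : ℂ) / (k + 1) := by field_simp
  calc _ = (Complex.I ^ k * (-Complex.I) ^ k) * ((N.choose k : ℂ) * 2 ^ k *
        (Complex.I * Real.pi * α / Complex.sin (Real.pi * α / 2) * (gbinom (-1 - (α : ℂ)) k / (k + 1))
        * ((w ^ ((1 : ℂ) + α))⁻¹ * (w ^ k)⁻¹))) := by ring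
    _ = Real.pi * α * Complex.I / (Complex.sin (Real.pi * α / 2) * w ^ ((1 : ℂ) + α)) *
        (((1 / ((N : ℂ) + 1)) * ((N + 1) * (N.choose k : ℂ) / (k + 1))) *
          gbinom (-1 - (α : ℂ)) k * (2 ^ k / w ^ k)) := by
        rw [hII, hNN]; ring
    _ = _ := by ring
end

section
/- Let m ∈ ℕ, b ∈ ℂ, and z ∈ ℂ. Then ∑_{k=0}^{m} ((−m)_k·(b)_k / ((2)_k · k!))·z^k = (1/(m+1))·∑_{k=0}^{m} C(m+1,k+1)·C(−b,k)·z^k; moreover, if b ≠ 1, this common value also equals −(1/(b−1))·∑_{k=0}^{m} C(m,k)·C(1−b,k+1)·z^k. (With b = 1+α, this says the terminating Gauss hypergeometric series ₂F₁(−m, 1+α; 2; z) equals (1/(m+1))·∑_{k=0}^m C(m+1,k+1)·C(−1−α,k)·z^k = −(1/α)·∑_{k=0}^m C(m,k)·C(−α,k+1)·z^k.) -/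
open MeasureTheory Finset

theorem poch_neg_aux (w : ℂ) (k : ℕ) :
    poch (-w) k = (-1) ^ k * ∏ i ∈ Finset.range k, (w - (i : ℂ)) := by
  induction k with
  | zero => simp [poch]
  | succ k ih =>
    unfold poch at ih ⊢
    rw [Finset.prod_range_succ, ih, Finset.prod_range_succ]
    ring

theorem poch_two_aux (k : ℕ) : poch 2 k = ((k + 1).factorial : ℂ) := by
  induction k with
  | zero => simp [poch]
  | succ k ih =>
    unfold poch at ih ⊢
    rw [Finset.prod_range_succ, ih, Nat.factorial_succ (k + 1)]
    push_cast
    ring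

theorem prod_shift_aux (w : ℂ) (k : ℕ) :
    ∏ i ∈ Finset.range (k + 1), (w + 1 - (i : ℂ)) =
      (w + 1) * ∏ i ∈ Finset.range k, (w - (i : ℂ)) := by
  rw [Finset.prod_range_succ', mul_comm]
  congr 1
  · simp
  · apply Finset.prod_congr rfl
    intro i _
    push_cast
    ring

theorem term_aux (m b : ℂ) (k : ℕ) :
    poch (-m) k * poch b k / (poch 2 k * (k.factorial : ℂ)) =
      (∏ i ∈ Finset.range k, (m - (i : ℂ))) * (∏ i ∈ Finset.range k, (-b - (i : ℂ))) /
        (((k + 1).factorial : ℂ) * (k.factorial : ℂ)) := by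
  have h := poch_neg_aux (-b) k
  rw [neg_neg] at h
  have h1 : ((-1 : ℂ) ^ k) * (-1) ^ k = 1 := by rw [← mul_pow]; simp
  rw [h, poch_neg_aux, poch_two_aux]
  congr 1
  linear_combination (∏ i ∈ Finset.range k, (m - (i : ℂ))) *
    (∏ i ∈ Finset.range k, (-b - (i : ℂ))) * h1

theorem hyperGeom_2F1_c_two (m : ℕ) (b z : ℂ) :
    (∑ k ∈ Finset.range (m + 1),
        poch (-(m : ℂ)) k * poch b k / (poch 2 k * (k.factorial : ℂ)) * z ^ k =
      (1 / ((m : ℂ) + 1)) *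
        ∑ k ∈ Finset.range (m + 1), gbinom ((m : ℂ) + 1) (k + 1) * gbinom (-b) k * z ^ k) ∧
    (b ≠ 1 →
      ∑ k ∈ Finset.range (m + 1),
          poch (-(m : ℂ)) k * poch b k / (poch 2 k * (k.factorial : ℂ)) * z ^ k =
        -(1 / (b - 1)) *
          ∑ k ∈ Finset.range (m + 1), gbinom (m : ℂ) k * gbinom (1 - b) (k + 1) * z ^ k) := by
  constructor
  · rw [Finset.mul_sum]
    refine Finset.sum_congr rfl fun k _ => ?_
    have hm : (m : ℂ) + 1 ≠ 0 := Nat.cast_add_one_ne_zero m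
    have h1 : ((k + 1).factorial : ℂ) ≠ 0 := Nat.cast_ne_zero.mpr (Nat.factorial_ne_zero _)
    have h2 : (k.factorial : ℂ) ≠ 0 := Nat.cast_ne_zero.mpr (Nat.factorial_ne_zero _)
    rw [term_aux]
    unfold gbinom
    rw [prod_shift_aux]
    field_simp
  · intro hb
    rw [Finset.mul_sum]
    refine Finset.sum_congr rfl fun k _ => ?_
    have hm : b - 1 ≠ 0 := sub_ne_zero.mpr hb
    have h1 : ((k + 1).factorial : ℂ) ≠ 0 := Nat.cast_ne_zero.mpr (Nat.factorial_ne_zero _)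
    have h2 : (k.factorial : ℂ) ≠ 0 := Nat.cast_ne_zero.mpr (Nat.factorial_ne_zero _)
    rw [term_aux, show (1 : ℂ) - b = -b + 1 by ring]
    unfold gbinom
    rw [prod_shift_aux]
    generalize (∏ i ∈ Finset.range k, (-b - (i : ℂ))) = P
    generalize (∏ i ∈ Finset.range k, ((m : ℂ) - (i : ℂ))) = Q
    field_simp
    ring
end

section
/- Let n ∈ ℕ with n ≥ 1 and x ∈ ℝ. Define F : ℝ → ℂ by F(α) = −(2·Γ(1+α)/(ix+1)^(1+α)) · ∑_{k=0}^{n−1} C(n,k+1)·C(−1−α,k)·(2/(ix+1))^k (the closed-form fractional Laplacian of λ_n as a function of the order α). Then F(α) tends to λ_n(x) − 1 as α → 0 from the right (limit along (0,∞)). -/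
open MeasureTheory Finset

lemma gbinom_nat_aux (n k : ℕ) : gbinom (n : ℂ) k = (n.choose k : ℂ) := by
  have hk : (k.factorial : ℂ) ≠ 0 := by exact_mod_cast k.factorial_ne_zero
  rw [gbinom, div_eq_iff hk]
  have h : ∏ i ∈ Finset.range k, ((n : ℂ) - (i : ℂ)) = (n.descFactorial k : ℂ) := by
    induction k with
    | zero => simp
    | succ k ih =>
      rw [Finset.prod_range_succ, ih (by exact_mod_cast k.factorial_ne_zero),
        Nat.descFactorial_succ]
      by_cases hkn : k ≤ n
      · push_cast [Nat.cast_sub hkn]; ring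
      · have : n.descFactorial k = 0 := Nat.descFactorial_eq_zero_iff_lt.mpr (by omega)
        simp [this]
  rw [h, Nat.descFactorial_eq_factorial_mul_choose]
  push_cast; ring

lemma gbinom_neg_one_aux (k : ℕ) : gbinom (-1) k = (-1) ^ k := by
  have hk : (k.factorial : ℂ) ≠ 0 := by exact_mod_cast k.factorial_ne_zero
  rw [gbinom, div_eq_iff hk]
  clear hk
  induction k with
  | zero => simp
  | succ k ih =>
    rw [Finset.prod_range_succ, ih, Nat.factorial_succ]
    push_cast; ring

theorem fracLap_higgins_limit_alpha_zero (n : ℕ) (hn : 1 ≤ n) (x : ℝ) :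
    Filter.Tendsto
      (fun α : ℝ =>
        -(2 * (Real.Gamma (1 + α) : ℂ) /
              (Complex.I * (x : ℂ) + 1) ^ ((1 : ℂ) + (α : ℂ))) *
          ∑ k ∈ Finset.range n,
            gbinom (n : ℂ) (k + 1) * gbinom (-1 - (α : ℂ)) k *
              (2 / (Complex.I * (x : ℂ) + 1)) ^ k)
      (nhdsWithin 0 (Set.Ioi 0)) (nhds (higgins (n : ℤ) x - 1)) := by
  have hw0 : Complex.I * (x : ℂ) + 1 ≠ 0 := by
    intro h
    have := congrArg Complex.re h
    simp at this
  have hhig : higgins (n : ℤ) x = (1 - 2 / (Complex.I * (x : ℂ) + 1)) ^ n := by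
    rw [higgins, zpow_natCast]
    congr 1
    field_simp
    ring
  rw [hhig]
  generalize Complex.I * (x : ℂ) + 1 = w at hw0
  apply tendsto_nhdsWithin_of_tendsto_nhds
  have hΓ : ContinuousAt (fun α : ℝ => Real.Gamma (1 + α)) 0 := by
    have h1 : ContinuousAt Real.Gamma (1 + (0 : ℝ)) := by
      refine (Real.differentiableAt_Gamma ?_).continuousAt
      intro m h
      have : (0 : ℝ) ≤ m := Nat.cast_nonneg m
      linarith
    exact ContinuousAt.comp (f := fun α : ℝ => 1 + α) h1 (by fun_prop)
  have hΓc : ContinuousAt (fun α : ℝ => (Real.Gamma (1 + α) : ℂ)) 0 :=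
    Complex.continuous_ofReal.continuousAt.comp hΓ
  have hpow : ContinuousAt (fun α : ℝ => w ^ ((1 : ℂ) + (α : ℂ))) 0 :=
    ContinuousAt.const_cpow (by fun_prop) (Or.inl hw0)
  have hsum : ContinuousAt (fun α : ℝ => ∑ k ∈ Finset.range n,
            gbinom (n : ℂ) (k + 1) * gbinom (-1 - (α : ℂ)) k * (2 / w) ^ k) 0 := by
    unfold gbinom
    fun_prop
  have hne : w ^ ((1 : ℂ) + ((0 : ℝ) : ℂ)) ≠ 0 := by simpa using hw0
  have key := (((hΓc.const_mul 2).div hpow hne).neg.mul hsum).tendsto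
  have hb : (1 - 2 / w) ^ n = ∑ k ∈ Finset.range n,
      (n.choose (k + 1) : ℂ) * (-(2 / w)) ^ (k + 1) + 1 := by
    rw [sub_eq_neg_add, add_pow, Finset.sum_range_succ']
    simp [mul_comm]
  refine le_trans key (le_of_eq (congrArg nhds ?_))
  symm
  simp only [hb, gbinom_nat_aux, Complex.ofReal_zero, sub_zero, gbinom_neg_one_aux, add_zero,
    Real.Gamma_one, Complex.ofReal_one, Complex.cpow_one, add_sub_cancel_right, Pi.neg_apply,
    Pi.div_apply, Pi.mul_apply]
  rw [Finset.mul_sum]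
  refine Finset.sum_congr rfl fun k _ => ?_
  rw [neg_pow (2 / w), pow_succ, pow_succ]
  ring
end

section
/- Let n ∈ ℕ with n ≥ 1 and x ∈ ℝ. Then the function y ↦ (λ_n'(x−y) − λ_n'(x+y))/y is absolutely integrable on (0,∞), and (1/π)·∫₀^∞ (λ_n'(x−y) − λ_n'(x+y))/y dy = i·λ_n'(x). (This is the case α = 1 of the fractional Laplacian of the Higgins function, i.e. (−Δ)^(1/2)λ_n = H(λ_n') = i·λ_n' for n ≥ 1, where H is the Hilbert transform; note c_1/1 = 1/π.) -/
open MeasureTheory Finset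

/-- `1/(it+1)`. -/
noncomputable def hw (t : ℝ) : ℂ := (Complex.I * (t : ℂ) + 1)⁻¹

lemma hw_ne (t : ℝ) : Complex.I * (t : ℂ) + 1 ≠ 0 := by
  intro h
  have := congrArg Complex.re h
  simp at this

lemma hw_slit (t : ℝ) : Complex.I * (t : ℂ) + 1 ∈ Complex.slitPlane := by
  left; simp

lemma hw_norm_sq (t : ℝ) : ‖hw t‖ ^ 2 = (1 + t ^ 2)⁻¹ := by
  rw [hw, norm_inv, inv_pow, ← Complex.normSq_eq_norm_sq, Complex.normSq_apply]
  simp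
  ring

lemma hw_norm_le (t : ℝ) : ‖hw t‖ ≤ 1 := by
  have h := hw_norm_sq t
  have h2 : (1 + t ^ 2)⁻¹ ≤ 1 := inv_le_one_of_one_le₀ (by nlinarith [sq_nonneg t])
  nlinarith [norm_nonneg (hw t)]

lemma hw_cont : Continuous hw := by
  unfold hw
  exact Continuous.inv₀ (by fun_prop) hw_ne

lemma hw_hasDerivAt (t : ℝ) : HasDerivAt hw (-Complex.I * hw t ^ 2) t := by
  have h1 : HasDerivAt (fun s : ℝ => Complex.I * (s : ℂ) + 1) Complex.I t := by
    simpa using ((Complex.ofRealCLM.hasDerivAt (x := t)).const_mul Complex.I).add_const 1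
  have h2 := h1.inv (hw_ne t)
  refine h2.congr_deriv ?_
  simp only [hw]
  field_simp

lemma hw_log_hasDerivAt (t : ℝ) :
    HasDerivAt (fun s : ℝ => Complex.log (Complex.I * (s : ℂ) + 1)) (Complex.I * hw t) t := by
  have h1 : HasDerivAt (fun s : ℝ => Complex.I * (s : ℂ) + 1) Complex.I t := by
    simpa using ((Complex.ofRealCLM.hasDerivAt (x := t)).const_mul Complex.I).add_const 1
  refine (h1.clog_real (hw_slit t)).congr_deriv ?_
  simp [hw, div_eq_mul_inv]

lemma hw_int (x : ℝ) : Integrable (fun y : ℝ => (1 + (x + y) ^ 2)⁻¹) := by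
  have := integrable_inv_one_add_sq.comp_add_left x
  simpa using this

lemma hw_int' (x : ℝ) : Integrable (fun y : ℝ => (1 + (x - y) ^ 2)⁻¹) := by
  have := integrable_inv_one_add_sq.comp_sub_left x
  simpa using this

lemma hw_pow_int (x : ℝ) (k : ℕ) : Integrable (fun y : ℝ => hw (x + y) ^ (k + 2)) := by
  refine (hw_int x).mono' ?_ (Filter.Eventually.of_forall fun y => ?_)
  · exact ((hw_cont.comp (by fun_prop)).pow _).aestronglyMeasurable
  · rw [norm_pow, pow_add, hw_norm_sq]
    have : ‖hw (x + y)‖ ^ k ≤ 1 := pow_le_one₀ (norm_nonneg _) (hw_norm_le _)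
    have h3 : 0 ≤ (1 + (x + y) ^ 2)⁻¹ := by positivity
    nlinarith

lemma hw_pow_int' (x : ℝ) (k : ℕ) : Integrable (fun y : ℝ => hw (x - y) ^ (k + 2)) := by
  refine (hw_int' x).mono' ?_ (Filter.Eventually.of_forall fun y => ?_)
  · exact ((hw_cont.comp (by fun_prop)).pow _).aestronglyMeasurable
  · rw [norm_pow, pow_add, hw_norm_sq]
    have : ‖hw (x - y)‖ ^ k ≤ 1 := pow_le_one₀ (norm_nonneg _) (hw_norm_le _)
    have h3 : 0 ≤ (1 + (x - y) ^ 2)⁻¹ := by positivity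
    nlinarith

lemma hw_prod_int (x : ℝ) : Integrable (fun y : ℝ => hw (x - y) * hw (x + y)) := by
  refine ((hw_int' x).add (hw_int x)).mono' ?_ (Filter.Eventually.of_forall fun y => ?_)
  · exact ((hw_cont.comp (by fun_prop)).mul (hw_cont.comp (by fun_prop))).aestronglyMeasurable
  · simp only [Pi.add_apply]
    rw [norm_mul, ← hw_norm_sq, ← hw_norm_sq]
    nlinarith [norm_nonneg (hw (x - y)), norm_nonneg (hw (x + y)),
      sq_nonneg (‖hw (x - y)‖ - ‖hw (x + y)‖)]

lemma hw_tendsto (l : Filter ℝ) (f : ℝ → ℝ) (h : Filter.Tendsto (fun y => |f y|) l Filter.atTop) :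
    Filter.Tendsto (fun y => hw (f y)) l (nhds 0) := by
  rw [tendsto_zero_iff_norm_tendsto_zero]
  refine squeeze_zero' (Filter.Eventually.of_forall fun _ => norm_nonneg _) ?_
    (tendsto_inv_atTop_zero.comp h)
  filter_upwards [h.eventually_gt_atTop 0] with y hy
  rw [hw, norm_inv]
  refine inv_anti₀ hy ?_
  have := Complex.abs_im_le_norm (Complex.I * (f y : ℂ) + 1)
  simpa using this

lemma hw_tendsto_add (x : ℝ) :
    Filter.Tendsto (fun y => hw (x + y)) Filter.atTop (nhds 0) :=
  hw_tendsto _ _ (Filter.tendsto_abs_atTop_atTop.comp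
    (Filter.tendsto_atTop_add_const_left _ x Filter.tendsto_id))

lemma hw_tendsto_sub (x : ℝ) :
    Filter.Tendsto (fun y => hw (x - y)) Filter.atTop (nhds 0) :=
  hw_tendsto _ _ (Filter.tendsto_abs_atBot_atTop.comp
    (Filter.tendsto_atBot_add_const_left _ x Filter.tendsto_neg_atTop_atBot))

/-- Integral of the even part vanishes. -/
lemma hw_even (x : ℝ) (k : ℕ) :
    ∫ y in Set.Ioi (0 : ℝ), (hw (x - y) ^ (k + 2) + hw (x + y) ^ (k + 2)) = 0 := by
  have hc : ((k : ℂ) + 1) * Complex.I ≠ 0 :=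
    mul_ne_zero (by exact_mod_cast Nat.succ_ne_zero k) Complex.I_ne_zero
  have hd : ∀ y : ℝ, HasDerivAt (fun y : ℝ => (((k : ℂ) + 1) * Complex.I)⁻¹ *
      (hw (x - y) ^ (k + 1) - hw (x + y) ^ (k + 1)))
      (hw (x - y) ^ (k + 2) + hw (x + y) ^ (k + 2)) y := by
    intro y
    have h1 := ((hw_hasDerivAt (x - y)).comp_const_sub x y).pow (k + 1)
    have h2 := ((hw_hasDerivAt (x + y)).comp_const_add x y).pow (k + 1)
    refine ((h1.sub h2).const_mul ((((k : ℂ) + 1) * Complex.I)⁻¹)).congr_deriv ?_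
    rw [inv_mul_eq_iff_eq_mul₀ hc]
    push_cast
    ring
  have ht : Filter.Tendsto (fun y : ℝ => (((k : ℂ) + 1) * Complex.I)⁻¹ *
      (hw (x - y) ^ (k + 1) - hw (x + y) ^ (k + 1))) Filter.atTop (nhds 0) := by
    have := (((hw_tendsto_sub x).pow (k + 1)).sub ((hw_tendsto_add x).pow (k + 1))).const_mul
      ((((k : ℂ) + 1) * Complex.I)⁻¹)
    simpa using this
  have := integral_Ioi_of_hasDerivAt_of_tendsto (a := 0) (hd 0).continuousAt.continuousWithinAt
    (fun y _ => hd y) ((hw_pow_int' x k).add (hw_pow_int x k)).integrableOn ht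
  rw [this]
  simp

/-- Base case integral. -/
lemma hw_base (x : ℝ) :
    ∫ y in Set.Ioi (0 : ℝ), (2 * Complex.I) * (hw (x - y) * hw (x + y)) =
      Real.pi * Complex.I * hw x := by
  have hd : ∀ y : ℝ, HasDerivAt (fun y : ℝ => hw x *
      (Complex.log (Complex.I * ((x + y : ℝ) : ℂ) + 1) -
       Complex.log (Complex.I * ((x - y : ℝ) : ℂ) + 1)))
      ((2 * Complex.I) * (hw (x - y) * hw (x + y))) y := by
    intro y
    have h1 := (hw_log_hasDerivAt (x - y)).comp_const_sub x y
    have h2 := (hw_log_hasDerivAt (x + y)).comp_const_add x y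
    refine ((h2.sub h1).const_mul (hw x)).congr_deriv ?_
    have e1 := hw_ne x
    have e2 := hw_ne (x + y)
    have e3 := hw_ne (x - y)
    simp only [hw]
    field_simp
    push_cast
    ring
  have ht : Filter.Tendsto (fun y : ℝ => hw x *
      (Complex.log (Complex.I * ((x + y : ℝ) : ℂ) + 1) -
       Complex.log (Complex.I * ((x - y : ℝ) : ℂ) + 1))) Filter.atTop
      (nhds (hw x * (Complex.log Complex.I - Complex.log (-Complex.I)))) := by
    refine Filter.Tendsto.const_mul _ ?_
    have hinv : Filter.Tendsto (fun y : ℝ => (Complex.I * (x : ℂ) + 1) * ((y⁻¹ : ℝ) : ℂ))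
        Filter.atTop (nhds 0) := by
      have h0 : Filter.Tendsto (fun y : ℝ => ((y⁻¹ : ℝ) : ℂ)) Filter.atTop (nhds ((0 : ℝ) : ℂ)) :=
        (Complex.continuous_ofReal.tendsto 0).comp tendsto_inv_atTop_zero
      simpa using h0.const_mul (Complex.I * (x : ℂ) + 1)
    have g1 : Filter.Tendsto (fun y : ℝ => Complex.log
        ((Complex.I * (x : ℂ) + 1) * ((y⁻¹ : ℝ) : ℂ) + Complex.I)) Filter.atTop
        (nhds (Complex.log Complex.I)) := by
      refine Filter.Tendsto.clog (by simpa using hinv.add_const Complex.I) ?_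
      right; simp
    have g2 : Filter.Tendsto (fun y : ℝ => Complex.log
        ((Complex.I * (x : ℂ) + 1) * ((y⁻¹ : ℝ) : ℂ) - Complex.I)) Filter.atTop
        (nhds (Complex.log (-Complex.I))) := by
      refine Filter.Tendsto.clog (by simpa using hinv.sub_const Complex.I) ?_
      right; simp
    refine (g1.sub g2).congr' ?_
    filter_upwards [Filter.eventually_gt_atTop 0] with y hy
    have hyc : (y : ℂ) ≠ 0 := by exact_mod_cast hy.ne'
    have k1 : Complex.I * ((x + y : ℝ) : ℂ) + 1 =
        (y : ℂ) * ((Complex.I * (x : ℂ) + 1) * ((y⁻¹ : ℝ) : ℂ) + Complex.I) := by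
      push_cast; field_simp; ring
    have k2 : Complex.I * ((x - y : ℝ) : ℂ) + 1 =
        (y : ℂ) * ((Complex.I * (x : ℂ) + 1) * ((y⁻¹ : ℝ) : ℂ) - Complex.I) := by
      push_cast; field_simp; ring
    have n1 := hw_ne (x + y)
    have n2 := hw_ne (x - y)
    rw [k1] at n1 ⊢
    rw [k2] at n2 ⊢
    rw [Complex.log_ofReal_mul hy (right_ne_zero_of_mul n1),
      Complex.log_ofReal_mul hy (right_ne_zero_of_mul n2)]
    ring
  have := integral_Ioi_of_hasDerivAt_of_tendsto (a := 0) (hd 0).continuousAt.continuousWithinAt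
    (fun y _ => hd y) ((hw_prod_int x).const_mul (2 * Complex.I)).integrableOn ht
  rw [this, Complex.log_I, Complex.log_neg_I]
  simp
  ring

/-- The claim for a general function. -/
def HP (x : ℝ) (f : ℝ → ℂ) : Prop :=
  IntegrableOn (fun y : ℝ => (f (x - y) - f (x + y)) / (y : ℂ)) (Set.Ioi 0) ∧
    ∫ y in Set.Ioi (0 : ℝ), (f (x - y) - f (x + y)) / (y : ℂ) = Real.pi * Complex.I * f x

lemma HP_lin {x : ℝ} {f g : ℝ → ℂ} (hf : HP x f) (hg : HP x g) (a b : ℂ) :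
    HP x (fun t => a * f t + b * g t) := by
  have e : (fun y : ℝ => ((a * f (x - y) + b * g (x - y)) - (a * f (x + y) + b * g (x + y))) /
      (y : ℂ)) = fun y : ℝ => a * ((f (x - y) - f (x + y)) / (y : ℂ)) +
        b * ((g (x - y) - g (x + y)) / (y : ℂ)) := by
    funext y; ring
  have i1 := hf.1.const_mul a
  have i2 := hg.1.const_mul b
  unfold HP
  rw [e]
  refine ⟨i1.add i2, ?_⟩
  rw [integral_add i1 i2, integral_const_mul, integral_const_mul, hf.2, hg.2]
  ring

lemma HP_of_eq {x : ℝ} {f h : ℝ → ℂ}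
    (he : ∀ y : ℝ, 0 < y → (f (x - y) - f (x + y)) / (y : ℂ) = h y)
    (hi : IntegrableOn h (Set.Ioi 0))
    (hv : ∫ y in Set.Ioi (0 : ℝ), h y = Real.pi * Complex.I * f x) : HP x f := by
  constructor
  · exact hi.congr_fun (fun y hy => (he y hy).symm) measurableSet_Ioi
  · rw [← hv]
    exact setIntegral_congr_fun measurableSet_Ioi (fun y hy => he y hy)

lemma HP_pow (x : ℝ) (k : ℕ) : HP x (fun t => hw t ^ (k + 1)) := by
  induction k with
  | zero =>
    refine HP_of_eq (h := fun y => (2 * Complex.I) * (hw (x - y) * hw (x + y))) ?_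
      ((hw_prod_int x).const_mul (2 * Complex.I)).integrableOn (by simpa using hw_base x)
    intro y hy
    have hyc : (y : ℂ) ≠ 0 := by exact_mod_cast hy.ne'
    have e2 := hw_ne (x + y)
    have e3 := hw_ne (x - y)
    simp only [hw, zero_add, pow_one]
    field_simp
    push_cast
    ring
  | succ k ih =>
    have j : IntegrableOn (fun y : ℝ => hw (x - y) ^ (k + 2) + hw (x + y) ^ (k + 2))
      (Set.Ioi 0) := ((hw_pow_int' x k).add (hw_pow_int x k)).integrableOn
    have i1 := ih.1.const_mul (hw x)
    have i2 := j.const_mul (Complex.I * hw x)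
    refine HP_of_eq (h := fun y => hw x * ((hw (x - y) ^ (k + 1) - hw (x + y) ^ (k + 1)) / (y : ℂ))
      + Complex.I * hw x * (hw (x - y) ^ (k + 2) + hw (x + y) ^ (k + 2))) ?_ (i1.add i2) ?_
    · intro y hy
      have hyc : (y : ℂ) ≠ 0 := by exact_mod_cast hy.ne'
      have r1 : hw (x - y) = hw x + Complex.I * y * hw x * hw (x - y) := by
        have e1 := hw_ne x
        have e3 := hw_ne (x - y)
        simp only [hw]
        field_simp
        push_cast
        ring
      have r2 : hw (x + y) = hw x - Complex.I * y * hw x * hw (x + y) := by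
        have e1 := hw_ne x
        have e3 := hw_ne (x + y)
        simp only [hw]
        field_simp
        push_cast
        ring
      field_simp
      linear_combination hw (x - y) ^ (k + 1) * r1 - hw (x + y) ^ (k + 1) * r2
    · rw [integral_add i1 i2, integral_const_mul, integral_const_mul, ih.2, hw_even]
      ring

lemma HP_pow_mul (x : ℝ) (m : ℕ) : ∀ k : ℕ,
    HP x (fun t => hw t ^ (k + 1) * (1 - 2 * hw t) ^ m) := by
  induction m with
  | zero => intro k; simpa using HP_pow x k
  | succ m ih =>
    intro k
    have := HP_lin (ih k) (ih (k + 1)) 1 (-2)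
    convert this using 2
    ring

lemma higgins_eq (n : ℕ) : higgins (n : ℤ) = fun t => (1 - 2 * hw t) ^ n := by
  funext t
  have := hw_ne t
  simp only [higgins, zpow_natCast, hw]
  congr 1
  field_simp
  ring

lemma higgins'_eq (n : ℕ) (t : ℝ) : higgins' ((n + 1 : ℕ) : ℤ) t =
    (2 * Complex.I * (n + 1)) * (hw t ^ (1 + 1) * (1 - 2 * hw t) ^ n)  := by
  rw [higgins', higgins_eq]
  have h := ((((hw_hasDerivAt t).const_mul 2).const_sub 1).pow (n + 1)).deriv
  refine h.trans ?_
  push_cast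
  ring

theorem fracLap_higgins_alpha_one (n : ℕ) (hn : 1 ≤ n) (x : ℝ) :
    IntegrableOn (fun y : ℝ =>
        (higgins' (n : ℤ) (x - y) - higgins' (n : ℤ) (x + y)) / (y : ℂ)) (Set.Ioi 0) ∧
    (1 / (Real.pi : ℂ)) *
        ∫ y in Set.Ioi (0 : ℝ),
          (higgins' (n : ℤ) (x - y) - higgins' (n : ℤ) (x + y)) / (y : ℂ) =
      Complex.I * higgins' (n : ℤ) x := by
  obtain ⟨m, rfl⟩ : ∃ m, n = m + 1 := ⟨n - 1, by omega⟩
  have h := HP_lin (HP_pow_mul x m 1) (HP_pow_mul x m 1) (2 * Complex.I * (m + 1)) 0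
  simp only [zero_mul, add_zero] at h
  have e : (fun t => (2 * Complex.I * (m + 1)) * (hw t ^ (1 + 1) * (1 - 2 * hw t) ^ m)) =
      higgins' ((m + 1 : ℕ) : ℤ) := by
    funext t; rw [higgins'_eq]
  rw [e] at h
  refine ⟨h.1, ?_⟩
  rw [h.2]
  have : (Real.pi : ℂ) ≠ 0 := by exact_mod_cast Real.pi_ne_zero
  field_simp
end

section
/- Let n ∈ ℕ (n ≥ 0) and x ∈ ℝ. Then the function y ↦ (μ_n'(x−y) − μ_n'(x+y))/y is absolutely integrable on (0,∞), and (1/π)·∫₀^∞ (μ_n'(x−y) − μ_n'(x+y))/y dy = i·μ_n'(x). (This is the case α = 1 of the fractional Laplacian of the Christov function, i.e. (−Δ)^(1/2)μ_n = i·sgn(n+1/2)·μ_n'; note c_1/1 = 1/π.) -/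
open MeasureTheory Finset

/-- The affine factor `w(x) = 1 + i x`. -/
noncomputable def cw (x : ℝ) : ℂ := Complex.I * (x : ℂ) + 1

lemma cw_re (x : ℝ) : (cw x).re = 1 := by simp [cw]
lemma cw_im (x : ℝ) : (cw x).im = x := by simp [cw]

lemma cw_ne (x : ℝ) : cw x ≠ 0 := by
  intro h
  have := cw_re x
  rw [h] at this
  simp at this

lemma cw_normSq (x : ℝ) : ‖cw x‖ ^ 2 = 1 + x ^ 2 := by
  rw [← Complex.normSq_eq_norm_sq, Complex.normSq_apply, cw_re, cw_im]; ring

lemma cw_norm_ge (x : ℝ) : 1 ≤ ‖cw x‖ := by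
  have := Complex.abs_re_le_norm (cw x)
  rwa [cw_re, abs_one] at this

lemma cw_hasDeriv (x : ℝ) : HasDerivAt cw Complex.I x := by
  have h := ((Complex.ofRealCLM.hasDerivAt (x := x)).const_mul Complex.I).add_const 1
  refine (h.congr_deriv (by simp)).congr_of_eventuallyEq (Filter.Eventually.of_forall fun y => ?_)
  simp [cw]

lemma cw_cont : Continuous cw := by unfold cw; fun_prop

lemma cwinv_cont : Continuous (fun x => (cw x)⁻¹) := cw_cont.inv₀ cw_ne

lemma cwpow_hasDeriv (k : ℕ) (x : ℝ) :
    HasDerivAt (fun x => ((cw x)⁻¹) ^ (k + 1))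
      (-((k : ℂ) + 1) * Complex.I * ((cw x)⁻¹) ^ (k + 2)) x := by
  have h := ((cw_hasDeriv x).inv (cw_ne x)).pow (k + 1)
  refine h.congr_deriv ?_
  have := cw_ne x
  simp only [Nat.add_sub_cancel, Nat.cast_add, Nat.cast_one, Pi.inv_apply]
  rw [pow_add _ k 2, neg_div, div_eq_mul_inv, inv_pow _ 2]
  ring

lemma christov_eq (n : ℕ) (x : ℝ) :
    christov (n : ℤ) x =
      ∑ j ∈ Finset.range (n + 1), ((-2) ^ j * (n.choose j : ℂ)) * ((cw x)⁻¹) ^ (j + 1) := by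
  have hw := cw_ne x
  have h1 : christov (n : ℤ) x = (cw x)⁻¹ * (-2 * (cw x)⁻¹ + 1) ^ n := by
    have h2 : -2 * (cw x)⁻¹ + 1 = (Complex.I * (x : ℂ) - 1) / cw x := by
      field_simp
      simp [cw]; ring
    rw [h2, div_pow]
    unfold christov
    change _ / (cw x) ^ ((n : ℤ) + 1) = _
    rw [zpow_natCast, show ((n : ℤ) + 1) = ((n + 1 : ℕ) : ℤ) by push_cast; rfl, zpow_natCast,
      pow_succ]
    field_simp
  rw [h1, add_pow, Finset.mul_sum]
  refine Finset.sum_congr rfl fun j _ => ?_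
  rw [one_pow, mul_pow]; ring

lemma christov'_eq (n : ℕ) : ∃ c : ℕ → ℂ, ∀ x : ℝ, christov' (n : ℤ) x =
    ∑ j ∈ Finset.range (n + 1), c j * ((cw x)⁻¹) ^ (j + 2) := by
  refine ⟨fun j => ((-2) ^ j * (n.choose j : ℂ)) * (-((j : ℂ) + 1) * Complex.I), fun x => ?_⟩
  have hf : christov (n : ℤ) = fun x => ∑ j ∈ Finset.range (n + 1),
      ((-2) ^ j * (n.choose j : ℂ)) * ((cw x)⁻¹) ^ (j + 1) := funext (christov_eq n)
  unfold christov'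
  rw [hf]
  have h := HasDerivAt.fun_sum (u := Finset.range (n + 1)) (fun j _ =>
    (cwpow_hasDeriv j x).const_mul ((-2) ^ j * (n.choose j : ℂ)))
  rw [h.deriv]
  exact Finset.sum_congr rfl fun j _ => by ring

/-- `w⁻ᵏ` is integrable for `k ≥ 2`. -/
lemma cwpow_integrable (k : ℕ) : Integrable (fun y : ℝ => ((cw y)⁻¹) ^ (k + 2)) := by
  refine integrable_inv_one_add_sq.mono' (cwinv_cont.pow _).aestronglyMeasurable ?_
  refine Filter.Eventually.of_forall fun y => ?_
  rw [norm_pow, norm_inv, ← cw_normSq y, ← inv_pow]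
  have h1 := cw_norm_ge y
  exact pow_le_pow_of_le_one (by positivity) (inv_le_one_of_one_le₀ h1) (by omega)

lemma cwpow_int_sum (k : ℕ) (x : ℝ) :
    Integrable (fun y : ℝ => ((cw (x - y))⁻¹) ^ (k + 2) + ((cw (x + y))⁻¹) ^ (k + 2)) :=
  ((cwpow_integrable k).comp_sub_left x).add ((cwpow_integrable k).comp_add_left x)

lemma cwpow_tendsto (k : ℕ) (l : Filter ℝ) (g : ℝ → ℝ)
    (hg : Filter.Tendsto (fun y => |g y|) l Filter.atTop) :
    Filter.Tendsto (fun y => ((cw (g y))⁻¹) ^ (k + 1)) l (nhds 0) := by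
  have h : Filter.Tendsto (fun y => ‖cw (g y)‖) l Filter.atTop := by
    refine Filter.tendsto_atTop_mono (fun y => ?_) hg
    have := Complex.abs_im_le_norm (cw (g y))
    rwa [cw_im] at this
  have h2 := (Filter.tendsto_inv₀_cobounded (α := ℂ)).comp
    (tendsto_norm_atTop_iff_cobounded.mp h)
  simpa using h2.pow (k + 1)

lemma abs_sub_tendsto (x : ℝ) :
    Filter.Tendsto (fun y : ℝ => |x - y|) Filter.atTop Filter.atTop :=
  Filter.tendsto_abs_atBot_atTop.comp (Filter.tendsto_atBot_add_const_left _ x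
    Filter.tendsto_neg_atTop_atBot)

lemma abs_add_tendsto (x : ℝ) :
    Filter.Tendsto (fun y : ℝ => |x + y|) Filter.atTop Filter.atTop :=
  Filter.tendsto_abs_atTop_atTop.comp (Filter.tendsto_atTop_add_const_left _ x Filter.tendsto_id)

lemma cwpow_integral_sum (k : ℕ) (x : ℝ) :
    ∫ y in Set.Ioi (0 : ℝ), (((cw (x - y))⁻¹) ^ (k + 2) + ((cw (x + y))⁻¹) ^ (k + 2)) = 0 := by
  have hk : ((k : ℂ) + 1) ≠ 0 := by exact_mod_cast Nat.succ_ne_zero k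
  have hd : ∀ y : ℝ, HasDerivAt (fun y : ℝ => (((k : ℂ) + 1) * Complex.I)⁻¹ *
      (((cw (x - y))⁻¹) ^ (k + 1) - ((cw (x + y))⁻¹) ^ (k + 1)))
      (((cw (x - y))⁻¹) ^ (k + 2) + ((cw (x + y))⁻¹) ^ (k + 2)) y := by
    intro y
    have h1 := (cwpow_hasDeriv k (x - y)).scomp y ((hasDerivAt_id y).const_sub x)
    have h2 := (cwpow_hasDeriv k (x + y)).scomp y ((hasDerivAt_id y).const_add x)
    refine ((h1.sub h2).const_mul (((k : ℂ) + 1) * Complex.I)⁻¹).congr_deriv ?_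
    have := Complex.I_ne_zero
    simp only [neg_smul, one_smul]
    field_simp
    ring
  have ht := ((cwpow_tendsto k _ _ (abs_sub_tendsto x)).sub
    (cwpow_tendsto k _ _ (abs_add_tendsto x))).const_mul ((((k : ℂ) + 1) * Complex.I)⁻¹)
  rw [integral_Ioi_of_hasDerivAt_of_tendsto' (fun y _ => hd y)
    (cwpow_int_sum k x).integrableOn ht]
  simp

/-- The integrand for the power `w⁻ᵏ`. -/
noncomputable def Dk (k : ℕ) (x y : ℝ) : ℂ :=
  (((cw (x - y))⁻¹) ^ k - ((cw (x + y))⁻¹) ^ k) / (y : ℂ)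

lemma cw_sub (x y : ℝ) : cw (x - y) = cw x - Complex.I * y := by simp [cw]; ring
lemma cw_add (x y : ℝ) : cw (x + y) = cw x + Complex.I * y := by simp [cw]; ring

lemma Dk_one (x y : ℝ) (hy : y ≠ 0) :
    Dk 1 x y = 2 * Complex.I * ((cw (x - y))⁻¹ * (cw (x + y))⁻¹) := by
  have h1 := cw_ne (x - y)
  have h2 := cw_ne (x + y)
  have hy' : (y : ℂ) ≠ 0 := by exact_mod_cast hy
  have h3 : cw (x + y) - cw (x - y) = 2 * Complex.I * y := by rw [cw_sub, cw_add]; ring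
  unfold Dk
  field_simp
  linear_combination h3

lemma Dk_succ (k : ℕ) (x y : ℝ) (hy : y ≠ 0) :
    Dk (k + 1) x y = (cw x)⁻¹ * (Dk k x y +
      Complex.I * (((cw (x - y))⁻¹) ^ (k + 1) + ((cw (x + y))⁻¹) ^ (k + 1))) := by
  have h0 := cw_ne x
  have h1 := cw_ne (x - y)
  have h2 := cw_ne (x + y)
  have hy' : (y : ℂ) ≠ 0 := by exact_mod_cast hy
  have ha : ((cw (x - y))⁻¹) ^ k = ((cw (x - y))⁻¹) ^ (k + 1) * (cw x - Complex.I * y) := by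
    rw [← cw_sub, pow_succ, mul_assoc, inv_mul_cancel₀ h1, mul_one]
  have hb : ((cw (x + y))⁻¹) ^ k = ((cw (x + y))⁻¹) ^ (k + 1) * (cw x + Complex.I * y) := by
    rw [← cw_add, pow_succ, mul_assoc, inv_mul_cancel₀ h2, mul_one]
  unfold Dk
  rw [ha, hb]
  generalize ((cw (x - y))⁻¹) ^ (k + 1) = A
  generalize ((cw (x + y))⁻¹) ^ (k + 1) = B
  field_simp
  ring

lemma base_integrable (x : ℝ) :
    Integrable (fun y : ℝ => (cw (x - y))⁻¹ * (cw (x + y))⁻¹) := by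
  refine ((integrable_inv_one_add_sq.comp_sub_left x).add
    (integrable_inv_one_add_sq.comp_add_left x)).mono' ?_ ?_
  · exact ((cwinv_cont.comp (by fun_prop : Continuous fun y : ℝ => x - y)).mul
      (cwinv_cont.comp (by fun_prop : Continuous fun y : ℝ => x + y))).aestronglyMeasurable
  · refine Filter.Eventually.of_forall fun y => ?_
    rw [norm_mul, norm_inv, norm_inv, Pi.add_apply, ← cw_normSq, ← cw_normSq, ← inv_pow, ← inv_pow]
    nlinarith [sq_nonneg (‖cw (x - y)‖⁻¹ - ‖cw (x + y)‖⁻¹), sq_nonneg (‖cw (x - y)‖⁻¹),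
      sq_nonneg (‖cw (x + y)‖⁻¹)]

lemma log_tendsto (x : ℝ) : Filter.Tendsto
    (fun y : ℝ => Complex.log (cw (x - y)) - Complex.log (cw (x + y))) Filter.atTop
    (nhds (-(Real.pi * Complex.I))) := by
  have h0 : Filter.Tendsto (fun y : ℝ => ((y⁻¹ : ℝ) : ℂ) * cw x) Filter.atTop (nhds 0) := by
    have := ((Complex.continuous_ofReal.tendsto 0).comp
      (tendsto_inv_atTop_zero (𝕜 := ℝ))).mul_const (cw x)
    simpa using this
  have h1 := (h0.sub_const Complex.I).clog (by simp [Complex.mem_slitPlane_iff])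
  have h2 := (h0.add_const Complex.I).clog (by simp [Complex.mem_slitPlane_iff])
  have h3 := h1.sub h2
  rw [zero_sub, zero_add, Complex.log_neg_I, Complex.log_I] at h3
  have e : -(Real.pi / 2 : ℂ) * Complex.I - Real.pi / 2 * Complex.I
    = -(Real.pi * Complex.I) := by ring
  rw [e] at h3
  refine h3.congr' ?_
  filter_upwards [Filter.eventually_gt_atTop 0] with y hy
  have hy' : (y : ℂ) ≠ 0 := by exact_mod_cast hy.ne'
  have e1 : ((y⁻¹ : ℝ) : ℂ) * cw x - Complex.I = ((y⁻¹ : ℝ) : ℂ) * cw (x - y) := by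
    rw [cw_sub]; push_cast; field_simp
  have e2 : ((y⁻¹ : ℝ) : ℂ) * cw x + Complex.I = ((y⁻¹ : ℝ) : ℂ) * cw (x + y) := by
    rw [cw_add]; push_cast; field_simp
  rw [e1, e2, Complex.log_ofReal_mul (inv_pos.mpr hy) (cw_ne _),
    Complex.log_ofReal_mul (inv_pos.mpr hy) (cw_ne _)]
  ring

lemma base_integral (x : ℝ) :
    ∫ y in Set.Ioi (0 : ℝ), (cw (x - y))⁻¹ * (cw (x + y))⁻¹ = Real.pi / (2 * cw x) := by
  have h0 := cw_ne x
  have hd : ∀ y : ℝ, HasDerivAt (fun y : ℝ => (Complex.I / (2 * cw x)) *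
      (Complex.log (cw (x - y)) - Complex.log (cw (x + y))))
      ((cw (x - y))⁻¹ * (cw (x + y))⁻¹) y := by
    intro y
    have hs : ∀ z, cw z ∈ Complex.slitPlane := fun z => by
      simp [Complex.mem_slitPlane_iff, cw_re]
    have h1 := (((cw_hasDeriv (x - y)).clog_real (hs _))).scomp y ((hasDerivAt_id y).const_sub x)
    have h2 := (((cw_hasDeriv (x + y)).clog_real (hs _))).scomp y ((hasDerivAt_id y).const_add x)
    refine ((h1.sub h2).const_mul (Complex.I / (2 * cw x))).congr_deriv ?_
    have a1 := cw_ne (x - y)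
    have a2 := cw_ne (x + y)
    have h3 : cw (x + y) + cw (x - y) = 2 * cw x := by rw [cw_sub, cw_add]; ring
    simp only [neg_smul, one_smul]
    field_simp
    rw [Complex.I_sq]
    linear_combination h3
  rw [integral_Ioi_of_hasDerivAt_of_tendsto' (fun y _ => hd y)
    (base_integrable x).integrableOn ((log_tendsto x).const_mul _)]
  simp only [sub_zero, add_zero, sub_self, mul_zero]
  field_simp
  rw [Complex.I_sq]; ring

lemma Dk_main (k : ℕ) (x : ℝ) : IntegrableOn (Dk (k + 1) x) (Set.Ioi 0) ∧
    ∫ y in Set.Ioi (0 : ℝ), Dk (k + 1) x y = Complex.I * Real.pi * ((cw x)⁻¹) ^ (k + 1) := by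
  induction k with
  | zero =>
    have he : Set.EqOn (Dk 1 x)
        (fun y => 2 * Complex.I * ((cw (x - y))⁻¹ * (cw (x + y))⁻¹)) (Set.Ioi 0) :=
      fun y hy => Dk_one x y (ne_of_gt hy)
    constructor
    · exact ((base_integrable x).const_mul _).integrableOn.congr_fun he.symm measurableSet_Ioi
    · rw [zero_add, setIntegral_congr_fun measurableSet_Ioi he, integral_const_mul, base_integral]
      have h0 := cw_ne x
      field_simp
  | succ k ih =>
    have he : Set.EqOn (Dk (k + 1 + 1) x) (fun y => (cw x)⁻¹ * (Dk (k + 1) x y +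
      Complex.I * (((cw (x - y))⁻¹) ^ (k + 2) + ((cw (x + y))⁻¹) ^ (k + 2)))) (Set.Ioi 0) :=
      fun y hy => Dk_succ (k + 1) x y (ne_of_gt hy)
    have hi : IntegrableOn (fun y => Complex.I * (((cw (x - y))⁻¹) ^ (k + 2) +
      ((cw (x + y))⁻¹) ^ (k + 2))) (Set.Ioi 0) := ((cwpow_int_sum k x).const_mul _).integrableOn
    constructor
    · exact IntegrableOn.congr_fun ((ih.1.add hi).const_mul _) he.symm measurableSet_Ioi
    · rw [setIntegral_congr_fun measurableSet_Ioi he, integral_const_mul,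
        integral_add ih.1 hi, ih.2, integral_const_mul, cwpow_integral_sum]
      ring

theorem fracLap_christov_alpha_one (n : ℕ) (x : ℝ) :
    IntegrableOn (fun y : ℝ =>
        (christov' (n : ℤ) (x - y) - christov' (n : ℤ) (x + y)) / (y : ℂ)) (Set.Ioi 0) ∧
    (1 / (Real.pi : ℂ)) *
        ∫ y in Set.Ioi (0 : ℝ),
          (christov' (n : ℤ) (x - y) - christov' (n : ℤ) (x + y)) / (y : ℂ) =
      Complex.I * christov' (n : ℤ) x := by
  obtain ⟨c, hc⟩ := christov'_eq n
  have he : (fun y : ℝ => (christov' (n : ℤ) (x - y) - christov' (n : ℤ) (x + y)) / (y : ℂ)) =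
      fun y => ∑ j ∈ Finset.range (n + 1), c j * Dk (j + 2) x y := by
    funext y
    rw [hc, hc, ← Finset.sum_sub_distrib, Finset.sum_div]
    refine Finset.sum_congr rfl fun j _ => ?_
    unfold Dk
    ring
  have hi : ∀ j ∈ Finset.range (n + 1),
      IntegrableOn (fun y => c j * Dk (j + 2) x y) (Set.Ioi 0) :=
    fun j _ => (Dk_main (j + 1) x).1.const_mul _
  rw [he]
  refine ⟨integrable_finsetSum _ hi, ?_⟩
  rw [integral_finsetSum _ hi, hc, Finset.mul_sum, Finset.mul_sum]
  refine Finset.sum_congr rfl fun j _ => ?_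
  rw [integral_const_mul, (Dk_main (j + 1) x).2]
  have : (Real.pi : ℂ) ≠ 0 := by exact_mod_cast Real.pi_ne_zero
  field_simp
end

section
/- For all n, m ∈ ℤ, the function x ↦ λ_n(x)·conj(λ_m(x))/(π·(1+x²)) is absolutely integrable on ℝ, and ∫_ℝ λ_n(x)·conj(λ_m(x))/(π·(1+x²)) dx equals 1 if n = m and 0 otherwise. (That is, the complex Higgins functions {λ_n} form an orthonormal family in L²(ℝ) with weight w(x) = 1/(π(1+x²)).) -/
open MeasureTheory Finset

lemma hig_plus_ne (x : ℝ) : Complex.I * (x : ℂ) + 1 ≠ 0 := by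
  intro h
  have := congrArg Complex.re h
  simp at this

lemma hig_minus_ne (x : ℝ) : Complex.I * (x : ℂ) - 1 ≠ 0 := by
  intro h
  have := congrArg Complex.re h
  simp at this

lemma hig_conj (x : ℝ) :
    (starRingEnd ℂ) ((Complex.I * (x : ℂ) - 1) / (Complex.I * (x : ℂ) + 1)) =
      ((Complex.I * (x : ℂ) - 1) / (Complex.I * (x : ℂ) + 1))⁻¹ := by
  have h1 := hig_plus_ne x
  have h2 := hig_minus_ne x
  simp only [map_div₀, map_sub, map_add, map_mul, Complex.conj_I, Complex.conj_ofReal, map_one,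
    inv_div]
  have h3 : -Complex.I * (x : ℂ) + 1 ≠ 0 := by
    intro h
    apply h2
    linear_combination -h
  rw [div_eq_div_iff h3 h2]
  ring

lemma hig_ne (x : ℝ) : (Complex.I * (x : ℂ) - 1) / (Complex.I * (x : ℂ) + 1) ≠ 0 :=
  div_ne_zero (hig_minus_ne x) (hig_plus_ne x)

lemma hig_mul_conj (n m : ℤ) (x : ℝ) :
    higgins n x * (starRingEnd ℂ) (higgins m x) = higgins (n - m) x := by
  unfold higgins
  rw [map_zpow₀, hig_conj, inv_zpow, zpow_sub₀ (hig_ne x)]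
  rfl

lemma hig_norm (k : ℤ) (x : ℝ) : ‖higgins k x‖ = 1 := by
  have h := hig_mul_conj k k x
  rw [Complex.mul_conj, Complex.normSq_eq_norm_sq] at h
  have h' : ‖higgins k x‖ ^ 2 = 1 := by
    simp only [sub_self, higgins, zpow_zero] at h
    exact_mod_cast h
  nlinarith [norm_nonneg (higgins k x)]

lemma hig_base_hasDeriv (x : ℝ) :
    HasDerivAt (fun x : ℝ => (Complex.I * (x : ℂ) - 1) / (Complex.I * (x : ℂ) + 1))
      (2 * Complex.I / (Complex.I * (x : ℂ) + 1) ^ 2) x := by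
  have h0 : HasDerivAt (fun x : ℝ => Complex.I * (x : ℂ)) Complex.I x := by
    simpa using (Complex.ofRealCLM.hasDerivAt (x := x)).const_mul Complex.I
  have := (h0.sub_const 1).fun_div (h0.add_const 1) (hig_plus_ne x)
  refine this.congr_deriv ?_
  congr 1
  ring

lemma hig_hasDeriv (k : ℤ) (x : ℝ) :
    HasDerivAt (higgins k) (higgins k x * (-2 * Complex.I * k) / (1 + (x : ℂ) ^ 2)) x := by
  have h := (hasDerivAt_zpow k _ (Or.inl (hig_ne x))).comp x (hig_base_hasDeriv x)
  refine h.congr_deriv ?_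
  unfold higgins
  have h1 := hig_plus_ne x
  have h2 := hig_minus_ne x
  have h3 : (1 + (x : ℂ) ^ 2) = -(Complex.I * x - 1) * (Complex.I * x + 1) := by
    linear_combination (x : ℂ) ^ 2 * Complex.I_sq
  rw [h3, zpow_sub_one₀ (hig_ne x), inv_div]
  generalize ((Complex.I * (x : ℂ) - 1) / (Complex.I * (x : ℂ) + 1)) ^ k = A
  field_simp

lemma hig_tendsto (k : ℤ) (l : Filter ℝ) (hl : l ≤ Bornology.cobounded ℝ) :
    Filter.Tendsto (higgins k) l (nhds 1) := by
  have h1 : Filter.Tendsto (fun x : ℝ => Complex.I * (x : ℂ) + 1) l (Bornology.cobounded ℂ) := by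
    rw [← tendsto_norm_atTop_iff_cobounded]
    have hx : Filter.Tendsto (fun x : ℝ => ‖x‖) l Filter.atTop :=
      tendsto_norm_cobounded_atTop.mono_left hl
    refine Filter.tendsto_atTop_mono (fun x => ?_) hx
    have := Complex.abs_im_le_norm (Complex.I * (x : ℂ) + 1)
    simpa using this
  have h2 := Filter.tendsto_inv₀_cobounded.comp h1
  have h3 : Filter.Tendsto (fun x : ℝ => (Complex.I * (x : ℂ) - 1) / (Complex.I * (x : ℂ) + 1))
      l (nhds 1) := by
    have := (h2.const_mul (2 : ℂ)).const_sub 1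
    simp only [mul_zero, sub_zero] at this
    refine this.congr fun x => ?_
    have := hig_plus_ne x
    simp only [Function.comp]
    field_simp
    ring
  have := h3.zpow₀ k (Or.inl one_ne_zero)
  rw [one_zpow] at this
  exact this

lemma hig_integrable (k : ℤ) :
    Integrable (fun x : ℝ => higgins k x / ((Real.pi * (1 + x ^ 2) : ℝ) : ℂ)) := by
  refine (integrable_inv_one_add_sq.const_mul (Real.pi⁻¹)).mono' ?_ ?_
  · have hc : Continuous (higgins k) :=
      continuous_iff_continuousAt.2 fun x => (hig_hasDeriv k x).continuousAt
    refine (hc.div (by fun_prop) fun x => ?_).aestronglyMeasurable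
    have : Real.pi * (1 + x ^ 2) ≠ 0 := by positivity
    exact_mod_cast this
  · refine Filter.Eventually.of_forall fun x => ?_
    have : 0 ≤ Real.pi * (1 + x ^ 2) := by positivity
    rw [norm_div, hig_norm, Complex.norm_real, Real.norm_of_nonneg this, one_div, mul_inv]

theorem higgins_orthonormal (n m : ℤ) :
    Integrable (fun x : ℝ =>
        higgins n x * (starRingEnd ℂ) (higgins m x) / ((Real.pi * (1 + x ^ 2) : ℝ) : ℂ)) ∧
    ∫ x : ℝ, higgins n x * (starRingEnd ℂ) (higgins m x) / ((Real.pi * (1 + x ^ 2) : ℝ) : ℂ) =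
      if n = m then 1 else 0 := by
  simp only [hig_mul_conj]
  refine ⟨hig_integrable _, ?_⟩
  have hpi : (Real.pi : ℂ) ≠ 0 := by exact_mod_cast Real.pi_ne_zero
  split_ifs with h
  · subst h
    have : (fun x : ℝ => higgins (n - n) x / ((Real.pi * (1 + x ^ 2) : ℝ) : ℂ)) =
        fun x : ℝ => ((Real.pi⁻¹ * (1 + x ^ 2)⁻¹ : ℝ) : ℂ) := by
      funext x
      simp [higgins, mul_comm]
    rw [this, integral_complex_ofReal, integral_const_mul, integral_univ_inv_one_add_sq,
      inv_mul_cancel₀ Real.pi_ne_zero, Complex.ofReal_one]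
  · have hk : ((n - m : ℤ) : ℂ) ≠ 0 := by exact_mod_cast sub_ne_zero.2 h
    generalize n - m = k at *
    have key := integral_of_hasDerivAt_of_tendsto
      (f := fun x : ℝ => higgins k x * (Complex.I / (2 * Real.pi * k)))
      (f' := fun x : ℝ => higgins k x / ((Real.pi * (1 + x ^ 2) : ℝ) : ℂ))
      (fun x => ((hig_hasDeriv k x).mul_const _).congr_deriv ?_) (hig_integrable k)
      ((hig_tendsto k _ IsOrderBornology.atBot_le_cobounded).mul_const _)
      ((hig_tendsto k _ IsOrderBornology.atTop_le_cobounded).mul_const _)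
    · rw [key, sub_self]
    · have h3 : (1 + (x : ℂ) ^ 2) ≠ 0 := by
        have : (1 + x ^ 2) ≠ 0 := by positivity
        exact_mod_cast this
      push_cast
      field_simp
      linear_combination (-1 : ℂ) * higgins k x * Complex.I_sq
end
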